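/- The rewrite system R(G) for the group axioms is convergent modulo A: the rewrite relation →_{R(G)/A} on associatively flat terms is both confluent and terminating. -/

import Mathlib

/-!
Termination and confluence are both proved by interpreting terms in a suitable algebra.

*Termination.*  Variables and constants get weight 2, an associative symbol adds the weights of its
arguments, and any other symbol sends arguments of total weight `m` to `2 + m²`.  Addition is
associative, so the weight is invariant under `A` (`weight_aeq`); it is strictly monotone in every
argument and every rule of `R(G)` decreases it (`weight_rew`).

*Confluence.*  Every term is evaluated in the free group over the set of all terms (`nfEval`): the
symbol `fG` is the product, `iG` the inverse, `one` the unit, and a term headed by another symbol is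
a generator, namely that symbol applied to the normalized arguments (with arguments headed by the
same associative symbol spliced in).  All axioms of `A` and all rules of `R(G)` hold in this
algebra, so `nfEval` is constant along rewriting modulo `A`.  Conversely every flat term rewrites
modulo `A` to the term spelled by the reduced word of its value (`red_nf`), so two flat terms with
the same value are joinable.  The heart of `red_nf` is that free reduction of words is realised by
the cancellation rules (`red_reduce`) and inversion of words by the rules for `iG` (`red_inv`).
-/

/- ----------------------------------------------------------------------
  A formalization of the framework of "Congruence Closure Modulo Groups":
  variadic terms over a signature with associative symbols, rewriting
  modulo the (variadic) associativity axioms A, the rewrite system R(G)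
  for the group axioms, ground flat equations, the completion inference
  system 𝓘, derivations, fairness, critical pairs modulo A, congruence
  closure modulo a set of axioms, and the Phase I / Phase II
  transformations producing S(E).
---------------------------------------------------------------------- -/

namespace CCModG

/-- Variadic first-order terms: variables (indexed by ℕ), constants from `γ`,
and applications of function symbols from `F` to lists of terms. -/
inductive Tm (F : Type) (γ : Type) : Type
  | var : ℕ → Tm F γ
  | cst : γ → Tm F γ
  | app : F → List (Tm F γ) → Tm F γ

/-- Equations are (ordered representations of unordered) pairs of terms. -/
abbrev Eqn (F γ : Type) := Tm F γ × Tm F γ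

variable {F γ C₀ : Type}

/-- Application of a substitution. -/
def Tm.subst (σ : ℕ → Tm F γ) : Tm F γ → Tm F γ
  | .var n => σ n
  | .cst c => .cst c
  | .app f ts => .app f (ts.attach.map (fun t => Tm.subst σ t.1))
decreasing_by
  have := List.sizeOf_lt_of_mem t.2
  simp only [Tm.app.sizeOf_spec]
  omega

/-- Ground terms: terms containing no variables. -/
inductive Ground : Tm F γ → Prop
  | cst : ∀ c, Ground (.cst c)
  | app : ∀ (f : F) (ts : List (Tm F γ)), (∀ t ∈ ts, Ground t) → Ground (.app f ts)

/-- `headIs f t` holds iff `t` is headed by the function symbol `f`. -/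
def headIs (f : F) (t : Tm F γ) : Prop := ∃ ts, t = Tm.app f ts

/-- Associatively flat terms (w.r.t. the set `SA` of associative symbols):
every subterm headed by an associative symbol `f` has at least two arguments,
none of which is headed by `f` again. -/
inductive Flat (SA : Set F) : Tm F γ → Prop
  | var : ∀ n, Flat SA (.var n)
  | cst : ∀ c, Flat SA (.cst c)
  | app : ∀ (f : F) (ts : List (Tm F γ)), (∀ t ∈ ts, Flat SA t) →
      (f ∈ SA → 2 ≤ ts.length ∧ ∀ t ∈ ts, ¬ headIs f t) → Flat SA (.app f ts)

/-- The (variadic) associativity axiom scheme `A`: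
`f(x₁,…,x_m, f(y₁,…,y_i), z₁,…,z_n) ≈ f(x₁,…,x_m, y₁,…,y_i, z₁,…,z_n)`
(stated for arbitrary argument terms, so it covers all instances). -/
def ASax (SA : Set F) (s t : Tm F γ) : Prop :=
  ∃ (f : F) (us ws vs : List (Tm F γ)), f ∈ SA ∧ 2 ≤ ws.length ∧
    1 ≤ us.length + vs.length ∧
    s = .app f (us ++ (Tm.app f ws) :: vs) ∧ t = .app f (us ++ ws ++ vs)

/-- Closure of a relation under contexts (application at any position). -/
inductive Ctx (r : Tm F γ → Tm F γ → Prop) : Tm F γ → Tm F γ → Prop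
  | base : ∀ {s t}, r s t → Ctx r s t
  | app : ∀ {s t} (f : F) (us vs : List (Tm F γ)), Ctx r s t →
      Ctx r (.app f (us ++ s :: vs)) (.app f (us ++ t :: vs))

/-- Equality modulo associativity `A`: the reflexive–transitive–symmetric
closure of the associativity axioms applied at arbitrary positions. -/
def AEq (SA : Set F) : Tm F γ → Tm F γ → Prop :=
  Relation.ReflTransGen (fun s t => Ctx (ASax SA) s t ∨ Ctx (ASax SA) t s)

/-- One root rewrite step with a rule of `R` (applied to some instance). -/
def RuleStep (R : Set (Eqn F γ)) (s t : Tm F γ) : Prop :=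
  ∃ l r σ, (l, r) ∈ R ∧ s = Tm.subst σ l ∧ t = Tm.subst σ r

/-- Plain rewriting with `R` (a rule applied at any position). -/
def Rew (R : Set (Eqn F γ)) : Tm F γ → Tm F γ → Prop := Ctx (RuleStep R)

/-- Rewriting with `R` modulo associativity: `u →_{R/A} v` iff
`u ≈_A s →_R t ≈_A v` for some `s`, `t`. -/
def RewA (SA : Set F) (R : Set (Eqn F γ)) (s t : Tm F γ) : Prop :=
  ∃ s' t', AEq SA s s' ∧ Rew R s' t' ∧ AEq SA t' t

/-- A relation `r` is terminating on the terms satisfying `P`: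
there is no infinite `r`-chain of such terms. -/
def TerminatingOn {α : Type*} (r : α → α → Prop) (P : α → Prop) : Prop :=
  ¬ ∃ g : ℕ → α, (∀ n, P (g n)) ∧ ∀ n, r (g n) (g (n + 1))

/-- `R/A` is confluent (modulo `A`) on the terms satisfying `P`. -/
def ConfluentModAOn (SA : Set F) (R : Set (Eqn F γ)) (P : Tm F γ → Prop) : Prop :=
  ∀ a b c, P a → P b → P c →
    Relation.ReflTransGen (RewA SA R) a b → Relation.ReflTransGen (RewA SA R) a c →
    ∃ u v, Relation.ReflTransGen (RewA SA R) b u ∧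
      Relation.ReflTransGen (RewA SA R) c v ∧ AEq SA u v

/-- The convergent rewrite system `R(G)` for the group axioms with the
associative symbol `fG`, the inverse symbol `iG` and the unit `one`:
`i(1)→1, f(x,1)→x, f(1,x)→x, i(i(x))→x, f(x,i(x))→1, f(i(x),x)→1,`
`i(f(x,y))→f(i(y),i(x))`. -/
def RGrules (fG iG : F) (one : γ) : Set (Eqn F γ) :=
  {(.app iG [.cst one], .cst one),
   (.app fG [.var 0, .cst one], .var 0),
   (.app fG [.cst one, .var 0], .var 0),
   (.app iG [.app iG [.var 0]], .var 0),
   (.app fG [.var 0, .app iG [.var 0]], .cst one),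
   (.app fG [.app iG [.var 0], .var 0], .cst one),
   (.app iG [.app fG [.var 0, .var 1]], .app fG [.app iG [.var 1], .app iG [.var 0]])}

/-- The rewrite system `R(M)` for the monoid axioms:
`f(x,1)→x` and `f(1,x)→x`. -/
def RMrules (fG : F) (one : γ) : Set (Eqn F γ) :=
  {(.app fG [.var 0, .cst one], .var 0),
   (.app fG [.cst one, .var 0], .var 0)}

/-- Ground instances of a set of (possibly nonground) rules/equations. -/
def grInst (R : Set (Eqn F γ)) : Set (Eqn F γ) :=
  {e | ∃ l r σ, (l, r) ∈ R ∧ (∀ n, Ground (σ n)) ∧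
        e = (Tm.subst σ l, Tm.subst σ r)}

/-- `gr(A)`: the ground instances of the associativity axioms. -/
def grA (SA : Set F) : Set (Eqn F γ) :=
  {e | ASax SA e.1 e.2 ∧ Ground e.1 ∧ Ground e.2}

/-- One replacement step using a set of equations (in either direction,
at any position). -/
def EqStep (S : Set (Eqn F γ)) : Tm F γ → Tm F γ → Prop :=
  Ctx (fun a b => (a, b) ∈ S ∨ (b, a) ∈ S)

/-- `↔*_S`: the congruence (equational theory) generated by the set `S` of
(ground) equations: the reflexive–transitive closure of `EqStep S`. -/
def EqCl (S : Set (Eqn F γ)) : Tm F γ → Tm F γ → Prop :=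
  Relation.ReflTransGen (EqStep S)

/-- Replacement of one occurrence of `u` by `v` (at any position). -/
def Repl (u v : Tm F γ) : Tm F γ → Tm F γ → Prop :=
  Ctx (fun a b => a = u ∧ b = v)

/-- Terms all of whose constants come from the original set `C₀`
(the constant set is `C₀ ⊕ ℕ`, the new constants being the `Sum.inr` ones). -/
inductive InC0 : Tm F (C₀ ⊕ ℕ) → Prop
  | var : ∀ n, InC0 (.var n)
  | cst : ∀ c : C₀, InC0 (.cst (Sum.inl c))
  | app : ∀ (f : F) (ts : List (Tm F (C₀ ⊕ ℕ))), (∀ t ∈ ts, InC0 t) → InC0 (.app f ts)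

/-- `fS f u` is the term `f(u)` whose argument string is `u`. -/
def fS (f : F) (u : List γ) : Tm F γ := .app f (u.map .cst)

/-- Ground flat equations (Definition 3.1): C-constant equations, D-flat
equations, and A-flat equations. -/
def GFlatEq (SA : Set F) (e : Eqn F γ) : Prop :=
  (∃ c d : γ, e = (.cst c, .cst d)) ∨
  (∃ (g : F) (cs : List γ) (c : γ), 1 ≤ cs.length ∧ (g ∈ SA → 2 ≤ cs.length) ∧
      e = (fS g cs, .cst c)) ∨
  (∃ (f : F) (cs ds : List γ), f ∈ SA ∧ 2 ≤ cs.length ∧ 2 ≤ ds.length ∧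
      e = (fS f cs, fS f ds))

/-- The total order `≻` on the constants `C = C₀ ⊕ ℕ` (Definition 3.5
(i)–(iii)): new constants are compared by index (`c_i ≻ c_j` iff `i < j`),
every new constant is greater than every original constant, and original
constants are compared via the given precedence `prec`. -/
def cGT (prec : C₀ → ℕ) : (C₀ ⊕ ℕ) → (C₀ ⊕ ℕ) → Prop
  | Sum.inr i, Sum.inr j => i < j
  | Sum.inr _, Sum.inl _ => True
  | Sum.inl a, Sum.inl b => prec b < prec a
  | Sum.inl _, Sum.inr _ => False

/-- The length-lexicographic order on strings over `C` (longer strings are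
greater; strings of equal length are compared lexicographically). -/
def strGT (prec : C₀ → ℕ) (u v : List (C₀ ⊕ ℕ)) : Prop :=
  v.length < u.length ∨
  (u.length = v.length ∧ List.Lex (fun a b => cGT prec b a) v u)

/-- The order `≻` on ground flat terms (Definition 3.5). -/
inductive TGT (SA : Set F) (prec : C₀ → ℕ) : Tm F (C₀ ⊕ ℕ) → Tm F (C₀ ⊕ ℕ) → Prop
  | cc : ∀ {c d}, cGT prec c d → TGT SA prec (.cst c) (.cst d)
  | tc : ∀ (g : F) (ts : List (Tm F (C₀ ⊕ ℕ))) (c : C₀ ⊕ ℕ),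
      TGT SA prec (.app g ts) (.cst c)
  | aa : ∀ {f u v}, f ∈ SA → strGT prec u v → TGT SA prec (fS f u) (fS f v)

/-- `IsStr f t w`: the term `t` is either a constant (with one-letter
string `w`) or a term `f(w)` with argument string `w`. -/
def IsStr (f : F) (t : Tm F γ) (w : List γ) : Prop :=
  (∃ c, t = .cst c ∧ w = [c]) ∨ (2 ≤ w.length ∧ t = fS f w)

/-- `f̄(w)`: the term `f(w)` if `|w| ≥ 2`, and the constant itself if `w` is
a single letter. -/
def fbar (f : F) (w : List γ) : Tm F γ :=
  match w with
  | [c] => .cst c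
  | w => .app f (w.map .cst)

/-- The inference system 𝓘 (Figure 1) on sets of ground flat equations, with
argument strings of associative symbols represented as lists over `C`. -/
inductive Infer (SA : Set F) (prec : C₀ → ℕ) :
    Set (Eqn F (C₀ ⊕ ℕ)) → Set (Eqn F (C₀ ⊕ ℕ)) → Prop
  | deduce : ∀ {S : Set (Eqn F (C₀ ⊕ ℕ))} {f u1 u2 u3 s t ss ts},
      f ∈ SA → u1 ≠ [] → u2 ≠ [] → u3 ≠ [] →
      (fS f (u1 ++ u2), s) ∈ S → (fS f (u2 ++ u3), t) ∈ S →
      TGT SA prec (fS f (u1 ++ u2)) s → TGT SA prec (fS f (u2 ++ u3)) t →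
      IsStr f s ss → IsStr f t ts →
      Infer SA prec S (insert (fS f (u1 ++ ts), fS f (ss ++ u3)) S)
  | simplify : ∀ {S : Set (Eqn F (C₀ ⊕ ℕ))} {f u1 u2 u3 s t ts},
      f ∈ SA → 2 ≤ u2.length →
      (fS f (u1 ++ u2 ++ u3), s) ∈ S → (fS f u2, t) ∈ S →
      TGT SA prec (fS f u2) t → (u1 ++ u3 = [] → TGT SA prec s t) →
      IsStr f t ts →
      Infer SA prec S (insert (fbar f (u1 ++ ts ++ u3), s)
        (S \ {(fS f (u1 ++ u2 ++ u3), s)}))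
  | collapse : ∀ {S : Set (Eqn F (C₀ ⊕ ℕ))} {s t u d s'},
      (s, t) ∈ S → (u, .cst d) ∈ S →
      TGT SA prec s t → TGT SA prec u (.cst d) →
      (∀ f ts, u = .app f ts → f ∉ SA) →
      Repl u (.cst d) s s' →
      Infer SA prec S (insert (s', t) (S \ {(s, t)}))
  | compose : ∀ {S : Set (Eqn F (C₀ ⊕ ℕ))} {t c d},
      (t, .cst c) ∈ S → (.cst c, .cst d) ∈ S →
      TGT SA prec t (.cst c) → cGT prec c d →
      Infer SA prec S (insert (t, .cst d) (S \ {(t, .cst c)}))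
  | delete : ∀ {S : Set (Eqn F (C₀ ⊕ ℕ))} {s},
      (s, s) ∈ S → Infer SA prec S (S \ {(s, s)})

/-- A (possibly stuttering) derivation w.r.t. the inference system 𝓘. -/
def IsDeriv (SA : Set F) (prec : C₀ → ℕ) (D : ℕ → Set (Eqn F (C₀ ⊕ ℕ))) : Prop :=
  ∀ n, Infer SA prec (D n) (D (n + 1)) ∨ D (n + 1) = D n

/-- The set `S_∞ = ⋃_i ⋂_{j ≥ i} S_j` of persisting equations. -/
def Sinf {α : Type*} (D : ℕ → Set α) : Set α := {e | ∃ N, ∀ j, N ≤ j → e ∈ D j}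

/-- Fairness of a derivation: every inference that is applicable to the
persisting equations (hence continuously enabled) is accounted for: all of
its conclusions appear somewhere in the derivation, and it removes no
persisting equation. -/
def Fair (SA : Set F) (prec : C₀ → ℕ) (D : ℕ → Set (Eqn F (C₀ ⊕ ℕ))) : Prop :=
  ∀ S', Infer SA prec (Sinf D) S' → (S' ⊆ ⋃ k, D k) ∧ Sinf D ⊆ S'

/-- `S^≻`: the rewrite system obtained by orienting each equation of `S` by
the order `≻`. -/
def orient (SA : Set F) (prec : C₀ → ℕ) (S : Set (Eqn F (C₀ ⊕ ℕ))) :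
    Set (Eqn F (C₀ ⊕ ℕ)) :=
  {e | TGT SA prec e.1 e.2 ∧ (e ∈ S ∨ (e.2, e.1) ∈ S)}

/-- The critical pairs modulo associativity `CP_A(R)` (Definition 3.7). -/
def CPA (SA : Set F) (prec : C₀ → ℕ) (R : Set (Eqn F (C₀ ⊕ ℕ))) :
    Set (Eqn F (C₀ ⊕ ℕ)) :=
  {e | ∃ f u1 u2 u3 s t ss ts, f ∈ SA ∧ u1 ≠ [] ∧ u2 ≠ [] ∧ u3 ≠ [] ∧
      (fS f (u1 ++ u2), s) ∈ R ∧ (fS f (u2 ++ u3), t) ∈ R ∧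
      IsStr f s ss ∧ IsStr f t ts ∧ e = (fS f (u1 ++ ts), fS f (ss ++ u3))} ∪
  {e | ∃ f u1 u2 u3 s t ts, f ∈ SA ∧ 2 ≤ u2.length ∧
      (fS f (u1 ++ u2 ++ u3), s) ∈ R ∧ (fS f u2, t) ∈ R ∧
      (u1 ++ u3 = [] → TGT SA prec s t) ∧ IsStr f t ts ∧
      e = (fbar f (u1 ++ ts ++ u3), s)} ∪
  {e | ∃ s t u d s', (s, t) ∈ R ∧ (u, Tm.cst d) ∈ R ∧
      (∀ f ts, u = .app f ts → f ∉ SA) ∧ Repl u (.cst d) s s' ∧ e = (s', t)}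

/-- Congruence closure `CC^F(E)` of a set `E` of ground equations over
`T(Σ, C₀)` w.r.t. a set `Ax` of (possibly nonground) axioms: the smallest
relation containing `E`, containing every ground `C₀`-instance of the
axioms, and closed under reflexivity, symmetry, transitivity and
congruence. -/
inductive CCax (E Ax : Set (Eqn F (C₀ ⊕ ℕ))) :
    Tm F (C₀ ⊕ ℕ) → Tm F (C₀ ⊕ ℕ) → Prop
  | base : ∀ {s t}, (s, t) ∈ E → CCax E Ax s t
  | inst : ∀ {l r} (σ : ℕ → Tm F (C₀ ⊕ ℕ)), (l, r) ∈ Ax →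
      (∀ n, Ground (σ n) ∧ InC0 (σ n)) → CCax E Ax (Tm.subst σ l) (Tm.subst σ r)
  | refl : ∀ {s}, Ground s → InC0 s → CCax E Ax s s
  | symm : ∀ {s t}, CCax E Ax s t → CCax E Ax t s
  | trans : ∀ {s t u}, CCax E Ax s t → CCax E Ax t u → CCax E Ax s u
  | congr : ∀ {f : F} {ss ts : List (Tm F (C₀ ⊕ ℕ))},
      List.Forall₂ (CCax E Ax) ss ts → CCax E Ax (.app f ss) (.app f ts)

/-- The associativity axioms `A` as a set of equations. -/
def AaxS (SA : Set F) : Set (Eqn F γ) := {e | ASax SA e.1 e.2}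

/-- The group axioms
`G = A ∪ {f(x,1)≈x, f(1,x)≈x, f(x,i(x))≈1, f(i(x),x)≈1}`. -/
def GrpAxS (SA : Set F) (fG iG : F) (one : γ) : Set (Eqn F γ) :=
  AaxS SA ∪
  {(.app fG [.var 0, .cst one], .var 0), (.app fG [.cst one, .var 0], .var 0),
   (.app fG [.var 0, .app iG [.var 0]], .cst one),
   (.app fG [.app iG [.var 0], .var 0], .cst one)}

/-- The monoid axioms `M = A ∪ {f(x,1)≈x, f(1,x)≈x}`. -/
def MonAxS (SA : Set F) (fG : F) (one : γ) : Set (Eqn F γ) :=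
  AaxS SA ∪
  {(.app fG [.var 0, .cst one], .var 0), (.app fG [.cst one, .var 0], .var 0)}

/-- Evaluation of a term in an algebra with carrier `M`, interpretation `J`
of function symbols (variadic), interpretation `K` of constants, and
variable assignment `ρ`. -/
def evalTm {M : Type} (J : F → List M → M) (K : γ → M) (ρ : ℕ → M) : Tm F γ → M
  | .var n => ρ n
  | .cst c => K c
  | .app f ts => J f (ts.attach.map (fun t => evalTm J K ρ t.1))
decreasing_by
  have := List.sizeOf_lt_of_mem t.2
  simp only [Tm.app.sizeOf_spec]
  omega

/-- `s ≈_Ax t`: the equation `s ≈ t` holds in every model of the set `Ax` of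
equations (so for `Ax = E ∪ G` this is the word problem relation `≈_E^G`). -/
def SemEq (Ax : Set (Eqn F γ)) (s t : Tm F γ) : Prop :=
  ∀ (M : Type) (J : F → List M → M) (K : γ → M),
    (∀ e ∈ Ax, ∀ ρ : ℕ → M, evalTm J K ρ e.1 = evalTm J K ρ e.2) →
    ∀ ρ : ℕ → M, evalTm J K ρ s = evalTm J K ρ t

/-- `n` is a normal form of `s` w.r.t. `R/A`. -/
def IsNF (SA : Set F) (R : Set (Eqn F γ)) (s n : Tm F γ) : Prop :=
  Relation.ReflTransGen (RewA SA R) s n ∧ ∀ t, ¬ RewA SA R n t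

/-- `s` and `t` have the same normal form w.r.t. `R/A` (normal forms are
determined up to `≈_A`; flat terms represent their `A`-equivalence class). -/
def SameNF (SA : Set F) (R : Set (Eqn F γ)) (s t : Tm F γ) : Prop :=
  ∃ m n, IsNF SA R s m ∧ IsNF SA R t n ∧ AEq SA m n

/-- Proper subterms of associatively flat ground terms, including the
extension: `f(u)` is a proper subterm of `f(v u w)` for `f ∈ Σ_A`,
`|u| ≥ 2`, `|vw| ≠ 0`. -/
inductive PSubt (SA : Set F) : Tm F γ → Tm F γ → Prop
  | arg : ∀ {s : Tm F γ} {f : F} {ts : List (Tm F γ)}, s ∈ ts → PSubt SA s (.app f ts)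
  | sub : ∀ {s t : Tm F γ} {f : F} {ts : List (Tm F γ)},
      PSubt SA s t → t ∈ ts → PSubt SA s (.app f ts)
  | seg : ∀ {f : F} {us vs ws : List γ}, f ∈ SA → 2 ≤ us.length → vs ++ ws ≠ [] →
      PSubt SA (.app f (us.map .cst)) (.app f ((vs ++ us ++ ws).map .cst))

/-- `c` occurs as a constant in the term. -/
inductive CstIn (c : γ) : Tm F γ → Prop
  | cst : CstIn c (.cst c)
  | app : ∀ {t : Tm F γ} {f : F} {ts : List (Tm F γ)},
      CstIn c t → t ∈ ts → CstIn c (.app f ts)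

/- ------------------- Phase I ------------------- -/

/-- `t` is a constant. -/
def isCst (t : Tm F γ) : Prop := ∃ c, t = Tm.cst c

/-- Abstraction of a term: replace each immediate argument by (the constant
naming it under) `nm`. -/
def abst (nm : Tm F γ → γ) : Tm F γ → Tm F γ
  | .app g ts => .app g (ts.map (fun t => Tm.cst (nm t)))
  | t => t

/-- Reflexive argument-subterm relation (standard subterms). -/
inductive ArgSub : Tm F γ → Tm F γ → Prop
  | refl : ∀ t, ArgSub t t
  | arg : ∀ {s t : Tm F γ} {f : F} {ts : List (Tm F γ)},
      ArgSub s t → t ∈ ts → ArgSub s (.app f ts)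

/-- Proper (argument-)subterm. -/
def ProperArg (s t : Tm F γ) : Prop :=
  ∃ (f : F) (ts : List (Tm F γ)) (u : Tm F γ), t = Tm.app f ts ∧ u ∈ ts ∧ ArgSub s u

/-- `s'` is obtained from `s` by associative flattening followed by
`R/A`-normalization: `s →*_{R/A} u ≈_A s'` with `s'` flat and
`R/A`-irreducible. -/
def GNF (SA : Set F) (R : Set (Eqn F γ)) (s s' : Tm F γ) : Prop :=
  ∃ u, Relation.ReflTransGen (RewA SA R) s u ∧ AEq SA u s' ∧ Flat SA s' ∧
    ∀ v, ¬ RewA SA R s' v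

/-- Steps 1–2 of Phase I: associatively flatten and normalize both sides of
each equation of `E` by `R/A`, removing trivial equations. -/
def PhaseI12 (SA : Set F) (R E : Set (Eqn F γ)) : Set (Eqn F γ) :=
  {e | ∃ p ∈ E, GNF SA R p.1 e.1 ∧ GNF SA R p.2 e.2 ∧ e.1 ≠ e.2}

/-- Flattening of `E` for the semigroup case (Phase I without the
normalization step 2): only associative flattening of both sides. -/
def PhaseI1Sem (SA : Set F) (E : Set (Eqn F γ)) : Set (Eqn F γ) :=
  {e | ∃ p ∈ E, AEq SA p.1 e.1 ∧ Flat SA e.1 ∧ AEq SA p.2 e.2 ∧ Flat SA e.2}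

/-- An equation whose two sides are nonconstant and not both headed by the
same associative symbol must be split using a fresh constant in step 3. -/
def SplitCase (SA : Set F) (p : Eqn F γ) : Prop :=
  ∃ (g : F) (as_ : List (Tm F γ)) (h : F) (bs : List (Tm F γ)),
    p.1 = Tm.app g as_ ∧ p.2 = Tm.app h bs ∧ ¬(g = h ∧ g ∈ SA)

/-- The terms receiving fresh names in step 3 of Phase I: the nonconstant
proper subterms of `E₂`, together with one side of each equation that must
be split. -/
def NeedName (SA : Set F) (E₂ : Set (Eqn F γ)) : Set (Tm F γ) :=
  {t | ¬ isCst t ∧ ∃ p ∈ E₂, ProperArg t p.1 ∨ ProperArg t p.2} ∪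
  {t | ∃ p ∈ E₂, SplitCase SA p ∧ t = p.1}

/-- The defining equations introduced by flattening: `abst(t) ≈ nm(t)` for
each nonconstant proper subterm `t` of `E₂`. -/
def DefEqs (nm : Tm F γ → γ) (E₂ : Set (Eqn F γ)) : Set (Eqn F γ) :=
  {e | ∃ t, (¬ isCst t ∧ ∃ p ∈ E₂, ProperArg t p.1 ∨ ProperArg t p.2) ∧
        e = (abst nm t, .cst (nm t))}

/-- The flat equations replacing a top-level equation `p ∈ E₂`. -/
def TopOf (SA : Set F) (nm : Tm F γ → γ) (p e : Eqn F γ) : Prop :=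
  (isCst p.1 ∧ isCst p.2 ∧ e = p) ∨
  (∃ (f : F) (as_ bs : List (Tm F γ)), f ∈ SA ∧ p.1 = Tm.app f as_ ∧
      p.2 = Tm.app f bs ∧ e = (abst nm p.1, abst nm p.2)) ∨
  (∃ (g : F) (as_ : List (Tm F γ)) (c : γ), p.1 = Tm.app g as_ ∧ p.2 = Tm.cst c ∧
      e = (abst nm p.1, .cst c)) ∨
  (∃ (g : F) (as_ : List (Tm F γ)) (c : γ), p.2 = Tm.app g as_ ∧ p.1 = Tm.cst c ∧
      e = (abst nm p.2, .cst c)) ∨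
  (SplitCase SA p ∧ (e = (abst nm p.1, .cst (nm p.1)) ∨ e = (abst nm p.2, .cst (nm p.1))))

/-- All top-level equations produced from `E₂`. -/
def TopEqs (SA : Set F) (nm : Tm F γ → γ) (E₂ : Set (Eqn F γ)) : Set (Eqn F γ) :=
  {e | ∃ p ∈ E₂, TopOf SA nm p e}

/-- Step 3 of Phase I: `E'` is obtained from the flattened, normalized set
`E₂` by naming nonflat subterms with fresh constants from `C₁ ⊆ ℕ` via the
injective naming function `nm`, recording the defining equations. -/
def IsFlattening (SA : Set F) (E₂ : Set (Eqn F (C₀ ⊕ ℕ)))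
    (nm : Tm F (C₀ ⊕ ℕ) → (C₀ ⊕ ℕ)) (C1 : Set ℕ) (E' : Set (Eqn F (C₀ ⊕ ℕ))) : Prop :=
  (∀ c, nm (.cst c) = c) ∧
  (∀ t ∈ NeedName SA E₂, ∃ i ∈ C1, nm t = Sum.inr i) ∧
  (∀ s ∈ NeedName SA E₂, ∀ t ∈ NeedName SA E₂, nm s = nm t → s = t) ∧
  (∀ i ∈ C1, ∃ t ∈ NeedName SA E₂, nm t = Sum.inr i) ∧
  C1.Finite ∧
  E' = DefEqs nm E₂ ∪ TopEqs SA nm E₂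

/-- Phase I (with normalization by `Rn/A`): flatten, normalize, then flatten
into ground flat equations using fresh constants. -/
def IsPhaseI (SA : Set F) (Rn E : Set (Eqn F (C₀ ⊕ ℕ)))
    (nm : Tm F (C₀ ⊕ ℕ) → (C₀ ⊕ ℕ)) (C1 : Set ℕ) (E' : Set (Eqn F (C₀ ⊕ ℕ))) : Prop :=
  IsFlattening SA (PhaseI12 SA Rn E) nm C1 E'

/-- Phase I for the semigroup case (no normalization step 2). -/
def IsPhaseISem (SA : Set F) (E : Set (Eqn F (C₀ ⊕ ℕ)))
    (nm : Tm F (C₀ ⊕ ℕ) → (C₀ ⊕ ℕ)) (C1 : Set ℕ) (E' : Set (Eqn F (C₀ ⊕ ℕ))) : Prop :=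
  IsFlattening SA (PhaseI1Sem SA E) nm C1 E'

/- ------------------- Phase II ------------------- -/

/-- The set of constants available after introducing fresh constants
`C2 ⊆ ℕ`: all original constants together with the fresh ones. -/
def SetC (C2 : Set ℕ) : Set (C₀ ⊕ ℕ) :=
  {x | (∃ a : C₀, x = Sum.inl a) ∨ (∃ i ∈ C2, x = Sum.inr i)}

/-- `I(E')` (step 2 of Phase II). -/
def IEset (fG iG : F) (one : γ) (Ei : Set (Eqn F γ)) : Set (Eqn F γ) :=
  {(Tm.app iG [Tm.cst one], Tm.cst one)} ∪
  {e | ∃ m n : γ, (Tm.app iG [Tm.cst m], Tm.cst n) ∈ Ei ∧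
       (e = (Tm.app iG [Tm.cst n], Tm.cst m) ∨
        e = (Tm.app fG [Tm.cst m, Tm.cst n], Tm.cst one) ∨
        e = (Tm.app fG [Tm.cst n, Tm.cst m], Tm.cst one))}

/-- `U(C) = {f(c,1) ≈ c, f(1,c) ≈ c | c ∈ C}`. -/
def UCset (fG : F) (one : γ) (Cs : Set γ) : Set (Eqn F γ) :=
  {e | ∃ c ∈ Cs, e = (Tm.app fG [Tm.cst c, Tm.cst one], Tm.cst c) ∨
                 e = (Tm.app fG [Tm.cst one, Tm.cst c], Tm.cst c)}

/-- Phase II for the group axioms: fresh inverse equations are added for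
the constants lacking them, and `S(E) := E' ∪ I(E') ∪ U(C)`. -/
def IsPhaseIIG (fG iG : F) (one₀ : C₀) (C1 : Set ℕ) (E' : Set (Eqn F (C₀ ⊕ ℕ)))
    (C2 : Set ℕ) (SE : Set (Eqn F (C₀ ⊕ ℕ))) : Prop :=
  C1 ⊆ C2 ∧ C2.Finite ∧
  ∃ Ei : Set (Eqn F (C₀ ⊕ ℕ)), E' ⊆ Ei ∧
    (∀ e ∈ Ei, e ∈ E' ∨ ∃ c ∈ SetC (C₀ := C₀) C2, ∃ m ∈ C2 \ C1,
        e = (Tm.app iG [Tm.cst c], Tm.cst (Sum.inr m))) ∧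
    (∀ c ∈ SetC (C₀ := C₀) C2, c ≠ Sum.inl one₀ →
        ∃ c', (Tm.app iG [Tm.cst c], Tm.cst c') ∈ Ei ∨
              (Tm.app iG [Tm.cst c'], Tm.cst c) ∈ Ei) ∧
    SE = Ei ∪ IEset fG iG (Sum.inl one₀) Ei ∪ UCset fG (Sum.inl one₀) (SetC C2)

/-- Phase II for the monoid axioms: `S(E) := E' ∪ U(C)`. -/
def IsPhaseIIM (fG : F) (one₀ : C₀) (C1 : Set ℕ) (E' SE : Set (Eqn F (C₀ ⊕ ℕ))) : Prop :=
  SE = E' ∪ UCset fG (Sum.inl one₀) (SetC C1)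

/-- Phase II for `n` pairwise disjoint sets of group axioms. -/
def IsPhaseIIMulti (n : ℕ) (fs is_ : Fin n → F) (ones : Fin n → C₀) (C1 : Set ℕ)
    (E' : Set (Eqn F (C₀ ⊕ ℕ))) (C2 : Set ℕ) (SE : Set (Eqn F (C₀ ⊕ ℕ))) : Prop :=
  C1 ⊆ C2 ∧ C2.Finite ∧
  ∃ Ei : Set (Eqn F (C₀ ⊕ ℕ)), E' ⊆ Ei ∧
    (∀ e ∈ Ei, e ∈ E' ∨ ∃ (l : Fin n), ∃ c ∈ SetC (C₀ := C₀) C2, ∃ m ∈ C2 \ C1,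
        e = (Tm.app (is_ l) [Tm.cst c], Tm.cst (Sum.inr m))) ∧
    (∀ (l : Fin n), ∀ c ∈ SetC (C₀ := C₀) C2, c ≠ Sum.inl (ones l) →
        ∃ c', (Tm.app (is_ l) [Tm.cst c], Tm.cst c') ∈ Ei ∨
              (Tm.app (is_ l) [Tm.cst c'], Tm.cst c) ∈ Ei) ∧
    SE = Ei ∪ (⋃ l : Fin n, IEset (fs l) (is_ l) (Sum.inl (ones l)) Ei) ∪
         (⋃ l : Fin n, UCset (fs l) (Sum.inl (ones l)) (SetC C2))

/- -------- Proof complexities and the proof ordering (Def. 3.8) -------- -/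

/-- The complexity of a proof step: a triple of a multiset of terms and two
elements of `Option Tm` (`none` playing the role of `⊥`). -/
abbrev StepCmp (F C₀ : Type) :=
  Multiset (Tm F (C₀ ⊕ ℕ)) × Option (Tm F (C₀ ⊕ ℕ)) × Option (Tm F (C₀ ⊕ ℕ))

/-- Lift of an order to `Option` with `none` (⊥) minimal. -/
def optGT {α : Type*} (r : α → α → Prop) (a b : Option α) : Prop :=
  ∃ x, a = some x ∧ (b = none ∨ ∃ y, b = some y ∧ r x y)

/-- The (Dershowitz–Manna) multiset extension of an order. -/
def MSExt {α : Type*} (r : α → α → Prop) (M N : Multiset α) : Prop :=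
  ∃ M₀ X Y, X ≠ 0 ∧ M = M₀ + X ∧ N = M₀ + Y ∧ ∀ y ∈ Y, ∃ x ∈ X, r x y

/-- Comparison of step complexities: lexicographically, by the multiset
extension of `≻` on the first component and by `≻` (with `⊥` minimal) on
the second and third components. -/
def stepGT (SA : Set F) (prec : C₀ → ℕ) (a b : StepCmp F C₀) : Prop :=
  MSExt (TGT SA prec) a.1 b.1 ∨
  (a.1 = b.1 ∧ (optGT (TGT SA prec) a.2.1 b.2.1 ∨
    (a.2.1 = b.2.1 ∧ optGT (TGT SA prec) a.2.2 b.2.2)))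

/-- `IsProof SA prec S s t M`: there is a proof of `s ≈ t` using equations
of `S` and ground instances of the associativity axioms `gr(A)`, whose
complexity (the multiset of the complexities of its proof steps, per
Definition 3.8) is `M`. -/
inductive IsProof (SA : Set F) (prec : C₀ → ℕ) (S : Set (Eqn F (C₀ ⊕ ℕ))) :
    Tm F (C₀ ⊕ ℕ) → Tm F (C₀ ⊕ ℕ) → Multiset (StepCmp F C₀) → Prop
  | refl : ∀ s, IsProof SA prec S s s 0
  | stepGTc : ∀ {u v s s' t M}, ((u, v) ∈ S ∨ (v, u) ∈ S) → TGT SA prec u v →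
      Repl u v s s' → IsProof SA prec S s' t M →
      IsProof SA prec S s t (({s}, some u, some s') ::ₘ M)
  | stepLTc : ∀ {u v s s' t M}, ((u, v) ∈ S ∨ (v, u) ∈ S) → TGT SA prec v u →
      Repl u v s s' → IsProof SA prec S s' t M →
      IsProof SA prec S s t (({s'}, some v, some s) ::ₘ M)
  | stepEqc : ∀ {u s s' t M}, (u, u) ∈ S →
      Repl u u s s' → IsProof SA prec S s' t M →
      IsProof SA prec S s t (({s, s'}, none, none) ::ₘ M)
  | stepA : ∀ {u v s s' t M}, (ASax SA u v ∨ ASax SA v u) → Ground u →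
      Repl u v s s' → IsProof SA prec S s' t M →
      IsProof SA prec S s t (({s}, none, some s') ::ₘ M)

/- -------- Monoid presentations (Definition 3.17 / Prop. 3.20) -------- -/

/-- `R(E)`: the D-flat and A-flat equations of `S(E) − U(C)` containing the
interpreted associative symbol `fG`. -/
def REset (fG : F) (UC SE : Set (Eqn F γ)) : Set (Eqn F γ) :=
  {e | e ∈ SE \ UC ∧
       ((∃ (u : List γ) (c : γ), 2 ≤ u.length ∧ e = (fS fG u, Tm.cst c)) ∨
        (∃ u v : List γ, 2 ≤ u.length ∧ 2 ≤ v.length ∧ e = (fS fG u, fS fG v)))}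

/-- `C(R)`: the constants appearing in `R(E)`, except the unit. -/
def CRset (one : γ) (RE : Set (Eqn F γ)) : Set γ :=
  {c | c ≠ one ∧ ∃ e ∈ RE, CstIn c e.1 ∨ CstIn c e.2}

/-- The string corresponding to one side of an equation of `R(E)`: the unit
becomes the empty string, any other constant a one-letter string, and a
term `f(u)` the string `u`. -/
def SideStr (fG : F) (one : γ) (t : Tm F γ) (w : List γ) : Prop :=
  (t = Tm.cst one ∧ w = []) ∨ (∃ c, c ≠ one ∧ t = Tm.cst c ∧ w = [c]) ∨
  (∃ u, t = fS fG u ∧ w = u)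

/-- The string relations of the monoid presentation `<C(R) | R(E)>`. -/
def RelOf (fG : F) (one : γ) (RE : Set (Eqn F γ)) : Set (List γ × List γ) :=
  {r | ∃ (u : List γ) (t : Tm F γ) (w : List γ),
        (fS fG u, t) ∈ RE ∧ SideStr fG one t w ∧ r = (u, w)}

/-- The congruence on strings generated by a set of string relations. -/
inductive StrEq (Rel : Set (List γ × List γ)) : List γ → List γ → Prop
  | rel : ∀ {u v} (x y : List γ), (u, v) ∈ Rel → StrEq Rel (x ++ u ++ y) (x ++ v ++ y)
  | refl : ∀ u, StrEq Rel u u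
  | symm : ∀ {u v}, StrEq Rel u v → StrEq Rel v u
  | trans : ∀ {u v w}, StrEq Rel u v → StrEq Rel v w → StrEq Rel u w

/-- The monoid presentation (with generators `X` and string relations `Rel`)
presents a finite group: there are finitely many congruence classes of
strings over `X`, and every string over `X` has a two-sided inverse. -/
def PresentsFiniteGroup (Rel : Set (List γ × List γ)) (X : Set γ) : Prop :=
  (∃ reps : Finset (List γ), ∀ u : List γ, (∀ a ∈ u, a ∈ X) →
      ∃ v ∈ reps, StrEq Rel u v) ∧
  (∀ u : List γ, (∀ a ∈ u, a ∈ X) →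
      ∃ v : List γ, (∀ a ∈ v, a ∈ X) ∧ StrEq Rel (u ++ v) [] ∧ StrEq Rel (v ++ u) [])

/-! ### Evaluation of terms -/

section Helpers

open Relation

theorem subst_app (σ : ℕ → Tm F γ) (f : F) (ts : List (Tm F γ)) :
    Tm.subst σ (.app f ts) = .app f (ts.map (Tm.subst σ)) := by
  rw [Tm.subst]; simp

theorem evalTm_app {M : Type} (J : F → List M → M) (K : γ → M) (ρ : ℕ → M)
    (f : F) (ts : List (Tm F γ)) :
    evalTm J K ρ (.app f ts) = J f (ts.map (evalTm J K ρ)) := by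
  rw [evalTm]; simp

theorem evalTm_ctx {M : Type} (J : F → List M → M) (K : γ → M) (ρ : ℕ → M)
    {r : Tm F γ → Tm F γ → Prop} (h : ∀ s t, r s t → evalTm J K ρ s = evalTm J K ρ t)
    {s t : Tm F γ} (hst : Ctx r s t) : evalTm J K ρ s = evalTm J K ρ t := by
  induction hst with
  | base h' => exact h _ _ h'
  | app f us vs _ ih => simp [evalTm_app, ih]

theorem evalTm_aeq {M : Type} (J : F → List M → M) (K : γ → M) (ρ : ℕ → M) (SA : Set F)
    (h : ∀ s t, ASax SA s t → evalTm J K ρ s = evalTm J K ρ t)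
    {s t : Tm F γ} (hst : AEq SA s t) : evalTm J K ρ s = evalTm J K ρ t := by
  induction hst with
  | refl => rfl
  | tail _ hs ih =>
    rcases hs with hs | hs
    · exact ih.trans (evalTm_ctx J K ρ h hs)
    · exact ih.trans (evalTm_ctx J K ρ h hs).symm

/-- The instances of the rules of `R(G)`, with the substitution carried out. -/
theorem ruleStep_cases {fG iG : F} {one : γ} {s t : Tm F γ}
    (h : RuleStep (RGrules fG iG one) s t) :
    (s = .app iG [.cst one] ∧ t = .cst one) ∨
    (∃ x, s = .app fG [x, .cst one] ∧ t = x) ∨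
    (∃ x, s = .app fG [.cst one, x] ∧ t = x) ∨
    (∃ x, s = .app iG [.app iG [x]] ∧ t = x) ∨
    (∃ x, s = .app fG [x, .app iG [x]] ∧ t = .cst one) ∨
    (∃ x, s = .app fG [.app iG [x], x] ∧ t = .cst one) ∨
    (∃ x y, s = .app iG [.app fG [x, y]] ∧ t = .app fG [.app iG [y], .app iG [x]]) := by
  obtain ⟨l, r, σ, hR, rfl, rfl⟩ := h
  simp only [RGrules, Set.mem_insert_iff, Set.mem_singleton_iff, Prod.mk.injEq] at hR
  have hv : ∀ n, Tm.subst σ (.var n : Tm F γ) = σ n := fun n => by rw [Tm.subst]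
  have hc : ∀ c, Tm.subst σ (.cst c : Tm F γ) = .cst c := fun n => by rw [Tm.subst]
  rcases hR with ⟨rfl, rfl⟩ | ⟨rfl, rfl⟩ | ⟨rfl, rfl⟩ | ⟨rfl, rfl⟩ | ⟨rfl, rfl⟩ | ⟨rfl, rfl⟩ |
    ⟨rfl, rfl⟩ <;>
    simp only [subst_app, hv, hc, List.map_cons, List.map_nil]
  · exact .inl ⟨trivial, trivial⟩
  · exact .inr (.inl ⟨_, rfl, rfl⟩)
  · exact .inr (.inr (.inl ⟨_, rfl, rfl⟩))
  · exact .inr (.inr (.inr (.inl ⟨_, rfl, rfl⟩)))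
  · exact .inr (.inr (.inr (.inr (.inl ⟨_, rfl, trivial⟩))))
  · exact .inr (.inr (.inr (.inr (.inr (.inl ⟨_, rfl, trivial⟩)))))
  · exact .inr (.inr (.inr (.inr (.inr (.inr ⟨_, _, rfl, rfl⟩)))))

/-! ### Termination -/

open Classical in
/-- Interpretation of the function symbols on weights.  The maximum with 2 only matters for an
associative symbol without arguments, and keeps every weight at least 2. -/
noncomputable def wJ (SA : Set F) (f : F) (xs : List ℕ) : ℕ :=
  if f ∈ SA then max 2 xs.sum else 2 + xs.sum ^ 2

/-- The weight of a term. -/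
noncomputable def weight (SA : Set F) : Tm F γ → ℕ := evalTm (wJ SA) (fun _ => 2) (fun _ => 2)

theorem weight_app (SA : Set F) (f : F) (ts : List (Tm F γ)) :
    weight SA (.app f ts) = wJ SA f (ts.map (weight SA)) := evalTm_app _ _ _ _ _

theorem weight_cst (SA : Set F) (c : γ) : weight SA (.cst c : Tm F γ) = 2 := by
  rw [weight, evalTm]

theorem two_le_weight (SA : Set F) (t : Tm F γ) : 2 ≤ weight SA t := by
  cases t with
  | var n => rw [weight, evalTm]
  | cst c => rw [weight_cst]
  | app f ts => rw [weight_app, wJ]; split_ifs <;> omega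

theorem two_mul_length_le (SA : Set F) (ts : List (Tm F γ)) :
    2 * ts.length ≤ (ts.map (weight SA)).sum := by
  induction ts with
  | nil => simp
  | cons t ts ih => have := two_le_weight SA t; simp; omega

theorem weight_aeq (SA : Set F) {s t : Tm F γ} (h : AEq SA s t) :
    weight SA s = weight SA t := by
  refine evalTm_aeq _ _ _ SA ?_ h
  rintro s t ⟨f, us, ws, vs, hf, hws, -, rfl, rfl⟩
  change weight SA _ = weight SA _
  have := two_mul_length_le SA ws
  have e : max 2 (ws.map (weight SA)).sum = (ws.map (weight SA)).sum := by omega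
  simp [weight_app, wJ, hf, e]

theorem weight_rew {SA : Set F} {fG iG : F} {one : γ} (hfG : fG ∈ SA) (hiG : iG ∉ SA)
    {s t : Tm F γ} (h : Rew (RGrules fG iG one) s t) : weight SA t < weight SA s := by
  induction h with
  | base h =>
    rcases ruleStep_cases h with ⟨rfl, rfl⟩ | ⟨x, rfl, rfl⟩ | ⟨x, rfl, rfl⟩ | ⟨x, rfl, rfl⟩ |
      ⟨x, rfl, rfl⟩ | ⟨x, rfl, rfl⟩ | ⟨x, y, rfl, rfl⟩ <;>
      simp only [weight_app, weight_cst, wJ, hfG, hiG, if_true, if_false, List.map_cons,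
        List.map_nil, List.sum_cons, List.sum_nil]
    · norm_num
    · omega
    · omega
    · rename_i t
      have := two_le_weight SA t
      nlinarith [sq_nonneg (weight SA t)]
    · have := two_le_weight SA x
      refine lt_max_of_lt_right ?_
      nlinarith
    · have := two_le_weight SA x
      refine lt_max_of_lt_right ?_
      nlinarith
    · have hx := two_le_weight SA x
      have hy := two_le_weight SA y
      rw [max_eq_right (by nlinarith), max_eq_right (by omega)]
      nlinarith
  | @app s t f us vs h ih =>
    have := two_le_weight SA s
    have := two_le_weight SA t
    simp only [weight_app, wJ, List.map_append, List.map_cons, List.sum_append, List.sum_cons]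
    split_ifs
    · omega
    · gcongr

/-! ### The normalizing interpretation -/

/-- The term spelled by a letter of a word over terms. -/
def lit (iG : F) : Tm F γ × Bool → Tm F γ
  | (a, true) => a
  | (a, false) => .app iG [a]

/-- The term spelled by a word over terms; the empty word spells the unit. -/
def wordTm (fG iG : F) (one : γ) : List (Tm F γ × Bool) → Tm F γ
  | [] => .cst one
  | [x] => lit iG x
  | x :: y :: l => .app fG (lit iG x :: lit iG y :: l.map (lit iG))

open Classical in
/-- The term spelled by the reduced word of an element of the free group over terms. -/
noncomputable def groupTm (fG iG : F) (one : γ) (w : FreeGroup (Tm F γ)) : Tm F γ :=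
  wordTm fG iG one w.toWord

open Classical in
/-- The arguments that `t` contributes when it occurs below the associative symbol `g`: those of `t`
itself if `t` is headed by `g` (with at least two arguments), and otherwise just `t`. -/
noncomputable def splice (g : F) (t : Tm F γ) : List (Tm F γ) :=
  if h : ∃ us, t = .app g us ∧ 2 ≤ us.length then h.choose else [t]

open Classical in
/-- Interpretation of the function symbols in the free group over terms. -/
noncomputable def nfJ (SA : Set F) (fG iG : F) (one : γ) (g : F)
    (ws : List (FreeGroup (Tm F γ))) : FreeGroup (Tm F γ) :=
  if g = fG then ws.prod
  else if g = iG ∧ ws.length = 1 then ws.prod⁻¹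
  else if g ∈ SA then .of (.app g ((ws.map (groupTm fG iG one)).flatMap (splice g)))
  else .of (.app g (ws.map (groupTm fG iG one)))

open Classical in
/-- The value of a term in the free group over terms; its reduced word is the normal form. -/
noncomputable def nfEval (SA : Set F) (fG iG : F) (one : γ) : Tm F γ → FreeGroup (Tm F γ) :=
  evalTm (nfJ SA fG iG one) (fun c => if c = one then 1 else .of (.cst c)) (fun n => .of (.var n))

theorem splice_app (g : F) (us : List (Tm F γ)) (h : 2 ≤ us.length) :
    splice g (.app g us) = us := by
  have h' : ∃ vs, (Tm.app g us : Tm F γ) = .app g vs ∧ 2 ≤ vs.length := ⟨us, rfl, h⟩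
  rw [splice, dif_pos h']
  have := h'.choose_spec.1
  injection this with _ e
  exact e.symm

theorem splice_cases (g : F) (t : Tm F γ) :
    splice g t = [t] ∨ (t = .app g (splice g t) ∧ 2 ≤ (splice g t).length) := by
  by_cases h : ∃ us, t = .app g us ∧ 2 ≤ us.length
  · obtain ⟨us, rfl, h⟩ := h
    rw [splice_app g us h]
    exact .inr ⟨rfl, h⟩
  · left; rw [splice, dif_neg h]

theorem length_le_splice (g : F) (ts : List (Tm F γ)) :
    ts.length ≤ (ts.flatMap (splice g)).length := by
  induction ts with
  | nil => simp
  | cons t ts ih =>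
    have : 1 ≤ (splice g t).length := by
      rcases splice_cases g t with h | h
      · simp [h]
      · omega
    simp only [List.flatMap_cons, List.length_append, List.length_cons]
    omega

theorem groupTm_of (fG iG : F) (one : γ) (a : Tm F γ) : groupTm fG iG one (.of a) = a := by
  simp [groupTm, wordTm, lit]

theorem nfEval_app (SA : Set F) (fG iG : F) (one : γ) (f : F) (ts : List (Tm F γ)) :
    nfEval SA fG iG one (.app f ts) = nfJ SA fG iG one f (ts.map (nfEval SA fG iG one)) :=
  evalTm_app _ _ _ _ _

theorem nfEval_one (SA : Set F) (fG iG : F) (one : γ) :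
    nfEval SA fG iG one (.cst one) = 1 := by
  rw [nfEval, evalTm, if_pos rfl]

theorem nfEval_aeq {SA : Set F} {fG iG : F} {one : γ} (hiG : iG ∉ SA) {s t : Tm F γ}
    (h : AEq SA s t) : nfEval SA fG iG one s = nfEval SA fG iG one t := by
  refine evalTm_aeq _ _ _ SA ?_ h
  rintro s t ⟨f, us, ws, vs, hf, hws, -, rfl, rfl⟩
  change nfEval SA fG iG one _ = nfEval SA fG iG one _
  have hfi : f ≠ iG := fun e => hiG (e ▸ hf)
  by_cases hfG : f = fG
  · simp [nfEval_app, nfJ, hfG]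
  · simp only [nfEval_app, nfJ, hfG, hfi, hf, if_true, if_false, false_and, List.map_append,
      List.map_cons, List.flatMap_append, List.flatMap_cons, groupTm_of]
    rw [splice_app _ _ (le_trans (by simpa using hws) (length_le_splice f _))]
    simp

theorem nfEval_rew {SA : Set F} {fG iG : F} {one : γ} (hfi : fG ≠ iG) {s t : Tm F γ}
    (h : Rew (RGrules fG iG one) s t) : nfEval SA fG iG one s = nfEval SA fG iG one t := by
  refine evalTm_ctx _ _ _ ?_ h
  intro s t h
  change nfEval SA fG iG one _ = nfEval SA fG iG one _
  rcases ruleStep_cases h with ⟨rfl, rfl⟩ | ⟨x, rfl, rfl⟩ | ⟨x, rfl, rfl⟩ | ⟨x, rfl, rfl⟩ |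
      ⟨x, rfl, rfl⟩ | ⟨x, rfl, rfl⟩ | ⟨x, y, rfl, rfl⟩ <;>
    simp [nfEval_app, nfEval_one, nfJ, hfi.symm]

theorem nfEval_rewA {SA : Set F} {fG iG : F} {one : γ} (hiG : iG ∉ SA) (hfi : fG ≠ iG)
    {s t : Tm F γ} (h : ReflTransGen (RewA SA (RGrules fG iG one)) s t) :
    nfEval SA fG iG one s = nfEval SA fG iG one t := by
  induction h with
  | refl => rfl
  | tail _ hs ih =>
    obtain ⟨s', t', h1, h2, h3⟩ := hs
    exact ih.trans ((nfEval_aeq hiG h1).trans ((nfEval_rew hfi h2).trans (nfEval_aeq hiG h3)))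

/-! ### Reduction to normal form -/

/-- One rewrite step or one application of an associativity axiom in either direction. -/
def MStep (SA : Set F) (R : Set (Eqn F γ)) (s t : Tm F γ) : Prop :=
  Rew R s t ∨ Ctx (ASax SA) s t ∨ Ctx (ASax SA) t s

/-- Rewriting modulo `A` in any number of steps, associativity steps alone included. -/
def MRed (SA : Set F) (R : Set (Eqn F γ)) : Tm F γ → Tm F γ → Prop := ReflTransGen (MStep SA R)

theorem MRed.trans {SA : Set F} {R : Set (Eqn F γ)} {s t u : Tm F γ} (h : MRed SA R s t)
    (h' : MRed SA R t u) : MRed SA R s u := ReflTransGen.trans h h'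

theorem MRed.refl {SA : Set F} {R : Set (Eqn F γ)} (s : Tm F γ) : MRed SA R s s :=
  ReflTransGen.refl

theorem MRed.rule {SA : Set F} {R : Set (Eqn F γ)} {s t : Tm F γ} (h : RuleStep R s t) :
    MRed SA R s t := ReflTransGen.single (.inl (.base h))

theorem MRed.assoc {SA : Set F} {R : Set (Eqn F γ)} {s t : Tm F γ} (h : ASax SA s t) :
    MRed SA R s t := ReflTransGen.single (.inr (.inl (.base h)))

theorem MRed.assoc_symm {SA : Set F} {R : Set (Eqn F γ)} {s t : Tm F γ} (h : ASax SA s t) :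
    MRed SA R t s := ReflTransGen.single (.inr (.inr (.base h)))

theorem MRed.ctx {SA : Set F} {R : Set (Eqn F γ)} {s t : Tm F γ} (f : F)
    (us vs : List (Tm F γ)) (h : MRed SA R s t) :
    MRed SA R (.app f (us ++ s :: vs)) (.app f (us ++ t :: vs)) := by
  refine ReflTransGen.lift (fun x => Tm.app f (us ++ x :: vs)) ?_ _ _ h
  rintro a b (h | h | h)
  · exact .inl (.app f us vs h)
  · exact .inr (.inl (.app f us vs h))
  · exact .inr (.inr (.app f us vs h))

theorem MRed.args {SA : Set F} {R : Set (Eqn F γ)} (f : F) {ss ts : List (Tm F γ)}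
    (h : List.Forall₂ (MRed SA R) ss ts) : MRed SA R (.app f ss) (.app f ts) := by
  suffices H : ∀ us, MRed SA R (.app f (us ++ ss)) (.app f (us ++ ts)) from H []
  induction h with
  | nil => exact fun us => .refl _
  | @cons a b l l' hab _ ih =>
    intro us
    refine (MRed.ctx f us l hab).trans ?_
    simpa using ih (us ++ [b])

theorem MRed.args₂ {SA : Set F} {R : Set (Eqn F γ)} (f : F) {a b a' b' : Tm F γ}
    (h : MRed SA R a a') (h' : MRed SA R b b') :
    MRed SA R (.app f [a, b]) (.app f [a', b']) :=
  .args f (.cons h (.cons h' .nil))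

theorem MRed.arg {SA : Set F} {R : Set (Eqn F γ)} (f : F) {a a' : Tm F γ}
    (h : MRed SA R a a') : MRed SA R (.app f [a]) (.app f [a']) :=
  .args f (.cons h .nil)

/-- A mixed reduction is a reduction by `→_{R/A}` up to final associativity steps. -/
theorem MRed.exists_rewA {SA : Set F} {R : Set (Eqn F γ)} {s t : Tm F γ} (h : MRed SA R s t) :
    ∃ u, ReflTransGen (RewA SA R) s u ∧ AEq SA u t := by
  induction h with
  | refl => exact ⟨s, .refl, .refl⟩
  | tail _ hs ih =>
    obtain ⟨u, hu, hut⟩ := ih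
    rcases hs with hs | hs
    · exact ⟨_, hu.tail ⟨_, _, hut, hs, .refl⟩, .refl⟩
    · exact ⟨u, hu, hut.tail hs⟩

section Rules

variable {SA : Set F} {fG iG : F} {one : γ}

local notation "RG" => RGrules fG iG one

/-- The substitution sending variable 0 to `x` and all others to `y`. -/
def sub2 (x y : Tm F γ) : ℕ → Tm F γ
  | 0 => x
  | _ => y

theorem red_inv_one : MRed SA RG (.app iG [.cst one]) (.cst one) :=
  .rule ⟨.app iG [.cst one], .cst one, .var, by simp [RGrules], by simp [subst_app, Tm.subst],
    by simp [Tm.subst]⟩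

theorem red_mul_one (x : Tm F γ) : MRed SA RG (.app fG [x, .cst one]) x :=
  .rule ⟨.app fG [.var 0, .cst one], .var 0, sub2 x x, by simp [RGrules],
    by simp [subst_app, Tm.subst, sub2], by simp [Tm.subst, sub2]⟩

theorem red_one_mul (x : Tm F γ) : MRed SA RG (.app fG [.cst one, x]) x :=
  .rule ⟨.app fG [.cst one, .var 0], .var 0, sub2 x x, by simp [RGrules],
    by simp [subst_app, Tm.subst, sub2], by simp [Tm.subst, sub2]⟩

theorem red_inv_inv (x : Tm F γ) : MRed SA RG (.app iG [.app iG [x]]) x :=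
  .rule ⟨.app iG [.app iG [.var 0]], .var 0, sub2 x x, by simp [RGrules],
    by simp [subst_app, Tm.subst, sub2], by simp [Tm.subst, sub2]⟩

theorem red_mul_inv (x : Tm F γ) : MRed SA RG (.app fG [x, .app iG [x]]) (.cst one) :=
  .rule ⟨.app fG [.var 0, .app iG [.var 0]], .cst one, sub2 x x, by simp [RGrules],
    by simp [subst_app, Tm.subst, sub2], by simp [Tm.subst]⟩

theorem red_inv_mul (x : Tm F γ) : MRed SA RG (.app fG [.app iG [x], x]) (.cst one) :=
  .rule ⟨.app fG [.app iG [.var 0], .var 0], .cst one, sub2 x x, by simp [RGrules],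
    by simp [subst_app, Tm.subst, sub2], by simp [Tm.subst]⟩

theorem red_inv_distrib (x y : Tm F γ) :
    MRed SA RG (.app iG [.app fG [x, y]]) (.app fG [.app iG [y], .app iG [x]]) :=
  .rule ⟨.app iG [.app fG [.var 0, .var 1]], .app fG [.app iG [.var 1], .app iG [.var 0]],
    sub2 x y, by simp [RGrules], by simp [subst_app, Tm.subst, sub2],
    by simp [subst_app, Tm.subst, sub2]⟩

theorem red_assoc_left (hfG : fG ∈ SA) (x a b : Tm F γ) (l : List (Tm F γ)) :
    MRed SA RG (.app fG [x, .app fG (a :: b :: l)]) (.app fG (x :: a :: b :: l)) :=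
  .assoc ⟨fG, [x], a :: b :: l, [], hfG, by simp, by simp, by simp, by simp⟩

theorem red_assoc_left_symm (hfG : fG ∈ SA) (x a b : Tm F γ) (l : List (Tm F γ)) :
    MRed SA RG (.app fG (x :: a :: b :: l)) (.app fG [x, .app fG (a :: b :: l)]) :=
  .assoc_symm ⟨fG, [x], a :: b :: l, [], hfG, by simp, by simp, by simp, by simp⟩

/-! ### Words -/

theorem red_cons (hfG : fG ∈ SA) (x : Tm F γ × Bool) (l : List (Tm F γ × Bool)) :
    MRed SA RG (.app fG [lit iG x, wordTm fG iG one l]) (wordTm fG iG one (x :: l)) := by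
  match l with
  | [] => exact red_mul_one _
  | [y] => exact .refl _
  | y :: z :: l => exact red_assoc_left hfG _ _ _ _

theorem red_cons_symm (hfG : fG ∈ SA) (x : Tm F γ × Bool) {l : List (Tm F γ × Bool)}
    (hl : l ≠ []) :
    MRed SA RG (wordTm fG iG one (x :: l)) (.app fG [lit iG x, wordTm fG iG one l]) := by
  match l, hl with
  | [y], _ => exact .refl _
  | y :: z :: l, _ => exact red_assoc_left_symm hfG _ _ _ _

theorem red_assoc_right (hfG : fG ∈ SA) (x y z : Tm F γ) :
    MRed SA RG (.app fG [.app fG [x, y], z]) (.app fG [x, .app fG [y, z]]) :=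
  (MRed.assoc ⟨fG, [], [x, y], [z], hfG, by simp, by simp, by simp, rfl⟩).trans
    (red_assoc_left_symm hfG x y z [])

theorem red_assoc_right_symm (hfG : fG ∈ SA) (x y z : Tm F γ) :
    MRed SA RG (.app fG [x, .app fG [y, z]]) (.app fG [.app fG [x, y], z]) :=
  (red_assoc_left hfG x y z []).trans
    (MRed.assoc_symm ⟨fG, [], [x, y], [z], hfG, by simp, by simp, by simp, rfl⟩)

theorem red_append (hfG : fG ∈ SA) (l l' : List (Tm F γ × Bool)) :
    MRed SA RG (.app fG [wordTm fG iG one l, wordTm fG iG one l'])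
      (wordTm fG iG one (l ++ l')) := by
  induction l with
  | nil => exact red_one_mul _
  | cons x l ih =>
    by_cases hl : l = []
    · subst hl; exact red_cons hfG x l'
    · exact ((MRed.args₂ fG (red_cons_symm hfG x hl) (.refl _)).trans
        (red_assoc_right hfG _ _ _)).trans
        ((MRed.args₂ fG (.refl _) ih).trans (red_cons hfG x _))

theorem red_cancel (x : Tm F γ) (b : Bool) :
    MRed SA RG (.app fG [lit iG (x, b), lit iG (x, !b)]) (.cst one) := by
  cases b
  · exact red_inv_mul x
  · exact red_mul_inv x

theorem red_step (hfG : fG ∈ SA) {l l' : List (Tm F γ × Bool)} (h : FreeGroup.Red.Step l l') :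
    MRed SA RG (wordTm fG iG one l) (wordTm fG iG one l') := by
  obtain ⟨⟩ := h
  rename_i L₁ L₂ x b
  induction L₁ with
  | nil =>
    by_cases hL : L₂ = []
    · subst hL; exact red_cancel x b
    · exact (red_cons_symm hfG _ (by simp)).trans
        ((MRed.args₂ fG (.refl _) (red_cons_symm hfG _ hL)).trans
        ((red_assoc_right_symm hfG _ _ _).trans
        ((MRed.args₂ fG (red_cancel x b) (.refl _)).trans (red_one_mul _))))
  | cons y L₁ ih =>
    exact (red_cons_symm hfG y (by simp)).trans
      ((MRed.args₂ fG (.refl _) ih).trans (red_cons hfG y _))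

open Classical in
theorem red_reduce (hfG : fG ∈ SA) (l : List (Tm F γ × Bool)) :
    MRed SA RG (wordTm fG iG one l) (wordTm fG iG one (FreeGroup.reduce l)) := by
  have h : FreeGroup.Red l (FreeGroup.reduce l) := FreeGroup.reduce.red
  generalize FreeGroup.reduce l = l' at h ⊢
  induction h with
  | refl => exact .refl _
  | tail _ hs ih => exact ih.trans (red_step hfG hs)

theorem red_invRev (hfG : fG ∈ SA) (l : List (Tm F γ × Bool)) :
    MRed SA RG (.app iG [wordTm fG iG one l]) (wordTm fG iG one (FreeGroup.invRev l)) := by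
  have h1 : ∀ x : Tm F γ × Bool, MRed SA RG (.app iG [lit iG x])
      (wordTm fG iG one (FreeGroup.invRev [x])) := by
    rintro ⟨x, _ | _⟩
    · exact red_inv_inv x
    · exact .refl _
  induction l with
  | nil => exact red_inv_one
  | cons x l ih =>
    by_cases hl : l = []
    · subst hl; exact h1 x
    · have e : FreeGroup.invRev (x :: l) = FreeGroup.invRev l ++ FreeGroup.invRev [x] := by
        simp [FreeGroup.invRev]
      rw [e]
      exact (MRed.arg iG (red_cons_symm hfG x hl)).trans ((red_inv_distrib _ _).trans
        ((MRed.args₂ fG ih (h1 x)).trans (red_append hfG _ _)))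

/-! ### Every flat term reduces to its normal form -/

theorem red_mul (hfG : fG ∈ SA) (v w : FreeGroup (Tm F γ)) :
    MRed SA RG (.app fG [groupTm fG iG one v, groupTm fG iG one w])
      (groupTm fG iG one (v * w)) := by
  simp only [groupTm, FreeGroup.toWord_mul]
  exact (red_append hfG _ _).trans (red_reduce hfG _)

theorem red_inv (hfG : fG ∈ SA) (w : FreeGroup (Tm F γ)) :
    MRed SA RG (.app iG [groupTm fG iG one w]) (groupTm fG iG one w⁻¹) := by
  simp only [groupTm, FreeGroup.toWord_inv]
  exact red_invRev hfG _

theorem red_prod (hfG : fG ∈ SA) (v w : FreeGroup (Tm F γ)) (ws : List (FreeGroup (Tm F γ))) :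
    MRed SA RG (.app fG ((v :: w :: ws).map (groupTm fG iG one)))
      (groupTm fG iG one (v :: w :: ws).prod) := by
  induction ws generalizing v w with
  | nil => simpa using red_mul hfG v w
  | cons u ws ih =>
    rw [List.prod_cons]
    exact (red_assoc_left_symm hfG _ _ _ _).trans
      ((MRed.args₂ fG (.refl _) (ih w u)).trans (red_mul hfG _ _))

theorem red_splice {g : F} (hg : g ∈ SA) (ts us : List (Tm F γ))
    (h : 2 ≤ us.length + ts.length) :
    MRed SA RG (.app g (us ++ ts)) (.app g (us ++ ts.flatMap (splice g))) := by
  induction ts generalizing us with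
  | nil => exact .refl _
  | cons t ts ih =>
    simp only [List.length_cons] at h
    rcases splice_cases g t with ht | ⟨ht, hlen⟩
    · simpa [ht] using ih (us ++ [t]) (by simp; omega)
    · have h1 : MRed SA RG (.app g (us ++ t :: ts)) (.app g (us ++ splice g t ++ ts)) :=
        .assoc ⟨g, us, splice g t, ts, hg, hlen, by omega, by rw [← ht], rfl⟩
      refine h1.trans ?_
      simpa using ih (us ++ splice g t) (by simp; omega)

theorem red_nf (hfG : fG ∈ SA) {t : Tm F γ} (ht : Flat SA t) :
    MRed SA RG t (groupTm fG iG one (nfEval SA fG iG one t)) := by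
  induction ht with
  | var n => rw [nfEval, evalTm, groupTm_of]; exact .refl _
  | cst c =>
    by_cases hc : c = one
    · subst hc; rw [nfEval_one]; simpa [groupTm, wordTm] using MRed.refl _
    · rw [nfEval, evalTm, if_neg hc, groupTm_of]; exact .refl _
  | app f ts _ hA ih =>
    set ws := ts.map (nfEval SA fG iG one) with hws
    have hlen : ws.length = ts.length := by simp [hws]
    have h1 : MRed SA RG (.app f ts) (.app f (ws.map (groupTm fG iG one))) := by
      refine .args f ?_
      rw [hws, List.map_map, List.forall₂_map_right_iff, List.forall₂_same]
      exact ih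
    refine h1.trans ?_
    rw [nfEval_app, ← hws, nfJ]
    split_ifs with hf hi hs
    · subst hf
      have := (hA hfG).1
      match ws, hlen with
      | v :: w :: ws, _ => exact red_prod hfG v w ws
      | [], hlen => simp at hlen; omega
      | [w], hlen => simp at hlen; omega
    · obtain ⟨rfl, hl⟩ := hi
      obtain ⟨w, hw⟩ := List.length_eq_one_iff.mp hl
      simpa [hw] using red_inv hfG w
    · rw [groupTm_of]
      have := (hA hs).1
      simpa using red_splice hs (ws.map (groupTm fG iG one)) [] (by simp; omega)
    · rw [groupTm_of]; exact .refl _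

end Rules

end Helpers

/-- Lemma 2.1: the rewrite system `R(G)` for the group axioms is convergent
modulo `A`: the rewrite relation `→_{R(G)/A}` on associatively flat terms is
both terminating and confluent. -/
theorem RG_convergent_modulo_A
    {F γ : Type} [Finite F] (SA : Set F) (fG iG : F) (one : γ)
    (hfG : fG ∈ SA) (hiG : iG ∉ SA) (hfi : fG ≠ iG) :
    TerminatingOn (RewA SA (RGrules fG iG one)) (Flat SA) ∧
    ConfluentModAOn SA (RGrules fG iG one) (Flat SA) := by
  refine ⟨?_, ?_⟩
  · rintro ⟨g, -, hg⟩
    have hdec : ∀ n, weight SA (g (n + 1)) < weight SA (g n) := fun n => by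
      obtain ⟨s, t, h1, h2, h3⟩ := hg n
      rw [weight_aeq SA h1, ← weight_aeq SA h3]
      exact weight_rew hfG hiG h2
    have hle : ∀ n, weight SA (g n) + n ≤ weight SA (g 0) := fun n => by
      induction n with
      | zero => simp
      | succ n ih => have := hdec n; omega
    have := hle (weight SA (g 0) + 1)
    omega
  · intro a b c _ hb hc hab hac
    obtain ⟨u, hu, hu'⟩ := (red_nf (iG := iG) (one := one) hfG hb).exists_rewA
    obtain ⟨v, hv, hv'⟩ := (red_nf (iG := iG) (one := one) hfG hc).exists_rewA
    rw [← nfEval_rewA hiG hfi hab] at hu'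
    rw [← nfEval_rewA hiG hfi hac] at hv'
    have hsymm : ∀ x y : Tm F γ, AEq SA x y → AEq SA y x := fun x y h => by
      induction h with
      | refl => exact .refl
      | tail _ hs ih => exact .head hs.symm ih
    exact ⟨u, v, hu, hv, Relation.ReflTransGen.trans hu' (hsymm _ _ hv')⟩

end CCModG
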